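/- Majority dynamics enables positive UnanUD-consensus identity control: for every profile P whose UnanUD-consensus alternative is a, there exists an update order σ such that a is the UnanUD-consensus alternative of MD_σ(P). -/

import Mathlib

attribute [local instance] Classical.propDecidable

noncomputable section

/-- A preference over the set of alternatives `A`: a binary relation. -/
abbrev Pref (A : Type) := A → A → Prop

/-- A preference is a strict partial order: irreflexive and transitive. -/
def IsPref {A : Type} (pref : Pref A) : Prop :=
  Irreflexive pref ∧ Transitive pref

variable {A : Type} [Fintype A] [DecidableEq A]

/-- The support `n_P(ab)`: the number of agents preferring `a` to `b` in profile `P`. -/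
def support {n : ℕ} (P : Fin n → Pref A) (a b : A) : ℕ :=
  (Finset.univ.filter fun i => P i a b).card

/-- An update order: a list of ordered pairs of distinct alternatives containing,
for each unordered pair `{a, b}` of distinct alternatives, exactly one of `ab` or `ba`,
each exactly once. -/
def IsUpdateOrder (σ : List (A × A)) : Prop :=
  (∀ p ∈ σ, p.1 ≠ p.2) ∧
  (∀ a b : A, a ≠ b → σ.count (a, b) + σ.count (b, a) = 1)

/-- One step of majority dynamics, discussing the pair `p`: agents already ranking
`p.1` versus `p.2` keep their preference; every other agent adds `p.1 ≻ p.2` if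
`n_P(p.1 p.2) ≥ n_P(p.2 p.1)` (ties broken in favour of the first alternative of the
pair), and otherwise adds `p.2 ≻ p.1`, then takes the transitive closure. -/
def mdStep {n : ℕ} (P : Fin n → Pref A) (p : A × A) : Fin n → Pref A :=
  fun i =>
    if P i p.1 p.2 ∨ P i p.2 p.1 then P i
    else if support P p.2 p.1 ≤ support P p.1 p.2 then
      Relation.TransGen (fun x y => P i x y ∨ (x = p.1 ∧ y = p.2))
    else
      Relation.TransGen (fun x y => P i x y ∨ (x = p.2 ∧ y = p.1))

/-- Majority dynamics `MD_σ(P)`: process the pairs of the update order `σ` in order. -/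
def MD {n : ℕ} (σ : List (A × A)) (P : Fin n → Pref A) : Fin n → Pref A :=
  σ.foldl mdStep P

/-- `a` is a Condorcet winner in `P`. -/
def CondorcetWinner {n : ℕ} (P : Fin n → Pref A) (a : A) : Prop :=
  ∀ b, b ≠ a → support P b a < support P a b

/-- `a` is a Condorcet loser in `P`. -/
def CondorcetLoser {n : ℕ} (P : Fin n → Pref A) (a : A) : Prop :=
  ∀ b, b ≠ a → support P a b < support P b a

/-- `a` is undominated in a preference. -/
def Undominated {A : Type} (pref : Pref A) (a : A) : Prop := ∀ b, ¬ pref b a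

/-- `a` is dominant in a preference. -/
def Dominant {A : Type} (pref : Pref A) (a : A) : Prop := ∀ b, b ≠ a → pref a b

/-- `a` is dominated (by every other alternative) in a preference. -/
def DominatedIn {A : Type} (pref : Pref A) (a : A) : Prop := ∀ b, b ≠ a → pref b a

/-- Number of preferences of `P` in which `a` is undominated. -/
def udCount {n : ℕ} (P : Fin n → Pref A) (a : A) : ℕ :=
  (Finset.univ.filter fun i => Undominated (P i) a).card

/-- Number of preferences of `P` in which `a` is dominant. -/
def domCount {n : ℕ} (P : Fin n → Pref A) (a : A) : ℕ :=
  (Finset.univ.filter fun i => Dominant (P i) a).card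

/-- Number of preferences of `P` in which `a` is dominated. -/
def domdCount {n : ℕ} (P : Fin n → Pref A) (a : A) : ℕ :=
  (Finset.univ.filter fun i => DominatedIn (P i) a).card

/-- `a` is undominated in at least one preference and no alternative is undominated
in strictly more preferences than `a`. -/
def PlurUDTop {n : ℕ} (P : Fin n → Pref A) (a : A) : Prop :=
  0 < udCount P a ∧ ∀ b, udCount P b ≤ udCount P a

/-- `a` is the PlurUD-consensus alternative of `P`. -/
def PlurUDConsensus {n : ℕ} (P : Fin n → Pref A) (a : A) : Prop :=
  PlurUDTop P a ∧ ∀ b, PlurUDTop P b → b = a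

/-- `a` is dominant in at least one preference and no alternative is dominant
in strictly more preferences than `a`. -/
def PlurDomTop {n : ℕ} (P : Fin n → Pref A) (a : A) : Prop :=
  0 < domCount P a ∧ ∀ b, domCount P b ≤ domCount P a

/-- `a` is the PlurDom-consensus alternative of `P`. -/
def PlurDomConsensus {n : ℕ} (P : Fin n → Pref A) (a : A) : Prop :=
  PlurDomTop P a ∧ ∀ b, PlurDomTop P b → b = a

/-- `a` is dominated in at least one preference and no alternative is dominated
in strictly more preferences than `a`. -/
def PlurDomdTop {n : ℕ} (P : Fin n → Pref A) (a : A) : Prop :=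
  0 < domdCount P a ∧ ∀ b, domdCount P b ≤ domdCount P a

/-- `a` is the (unique) plurality dominated alternative of `P`. -/
def PlurDomdConsensus {n : ℕ} (P : Fin n → Pref A) (a : A) : Prop :=
  PlurDomdTop P a ∧ ∀ b, PlurDomdTop P b → b = a

/-- `a` is the MajUD-consensus alternative of `P`: undominated in strictly more than
`n / 2` of the preferences, and the unique alternative with this property. -/
def MajUDConsensus {n : ℕ} (P : Fin n → Pref A) (a : A) : Prop :=
  (n < 2 * udCount P a) ∧ ∀ b, n < 2 * udCount P b → b = a

/-- `a` is the MajDom-consensus alternative of `P`: dominant in strictly more than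
`n / 2` of the preferences (such an alternative is automatically unique). -/
def MajDomConsensus {n : ℕ} (P : Fin n → Pref A) (a : A) : Prop :=
  n < 2 * domCount P a

/-- `a` is the UnanUD-consensus alternative of `P`: undominated in every preference,
and the unique alternative with this property. -/
def UnanUDConsensus {n : ℕ} (P : Fin n → Pref A) (a : A) : Prop :=
  (∀ i, Undominated (P i) a) ∧ ∀ b, (∀ i, Undominated (P i) b) → b = a

/-- `a` is the UnanDom-consensus alternative of `P`: dominant in every preference. -/
def UnanDomConsensus {n : ℕ} (P : Fin n → Pref A) (a : A) : Prop :=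
  ∀ i, Dominant (P i) a

/-- A preference is a strict weak ordering: there is an ordered partition of the
alternatives into levels (given by a level function `f`) such that alternatives in the
same level are incomparable, and `a ≻ b` exactly when `a` is in an earlier level. -/
def IsSWO (pref : Pref A) : Prop :=
  ∃ (k : ℕ) (f : A → Fin k), ∀ a b : A, pref a b ↔ f a < f b

/-!
Discuss the pairs along a linear order of the alternatives whose first element is `a`, so that `a`
is never the second alternative of a discussed pair. As long as `a` is undominated in every
preference, nobody supports `b` over `a`, and the tie-breaking rule resolves the pair `ab` in favour
of `a`; hence `a` stays undominated. Majority dynamics never retracts a comparison, so no other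
alternative can become undominated in every preference.
-/

section Dynamics

variable {α : Type} {n : ℕ} {P : Fin n → Pref α} {a : α}

theorem Undominated.anti {r s : Pref α} (hrs : r ≤ s) (hs : Undominated s a) : Undominated r a :=
  fun b hb => hs b (hrs b a hb)

theorem Undominated.transGen {r : Pref α} (hr : Undominated r a) :
    Undominated (Relation.TransGen r) a := by
  intro b hba
  obtain ⟨c, -, hca⟩ := Relation.TransGen.tail'_iff.1 hba
  exact hr c hca

theorem Undominated.transGen_insert {r : Pref α} {c d : α} (hr : Undominated r a) (hd : d ≠ a) :
    Undominated (Relation.TransGen fun x y => r x y ∨ (x = c ∧ y = d)) a :=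
  Undominated.transGen fun b hba => hba.elim (hr b) fun hcd => hd hcd.2.symm

theorem support_eq_zero_of_undominated (ha : ∀ i, Undominated (P i) a) (b : α) :
    support P b a = 0 :=
  Finset.card_eq_zero.2 <| Finset.filter_eq_empty_iff.2 fun i _ => ha i b

theorem le_mdStep (P : Fin n → Pref α) (p : α × α) : P ≤ mdStep P p := by
  intro i x y hxy
  unfold mdStep
  split_ifs
  · exact hxy
  · exact .single (.inl hxy)
  · exact .single (.inl hxy)

theorem le_md (σ : List (α × α)) (P : Fin n → Pref α) : P ≤ MD σ P := by
  induction σ generalizing P with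
  | nil => exact le_rfl
  | cons p σ ih => exact (le_mdStep P p).trans (ih (mdStep P p))

theorem undominated_mdStep {p : α × α} (hp : p.2 ≠ a) (ha : ∀ i, Undominated (P i) a)
    (i : Fin n) : Undominated (mdStep P p i) a := by
  unfold mdStep
  split_ifs with _ hmaj
  · exact ha i
  · exact (ha i).transGen_insert hp
  · have hp₁ : p.1 ≠ a := by
      rintro rfl
      exact hmaj (by simp only [support_eq_zero_of_undominated ha, zero_le])
    exact (ha i).transGen_insert hp₁

theorem undominated_md {σ : List (α × α)} (hσ : ∀ p ∈ σ, p.2 ≠ a)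
    (ha : ∀ i, Undominated (P i) a) : ∀ i, Undominated (MD σ P i) a := by
  induction σ generalizing P with
  | nil => exact ha
  | cons p σ ih =>
    obtain ⟨hp, hσ'⟩ := List.forall_mem_cons.1 hσ
    exact ih hσ' (undominated_mdStep hp ha)

theorem UnanUDConsensus.md {σ : List (α × α)} (hσ : ∀ p ∈ σ, p.2 ≠ a)
    (ha : UnanUDConsensus P a) : UnanUDConsensus (MD σ P) a :=
  ⟨undominated_md hσ ha.1, fun b hb => ha.2 b fun i => (hb i).anti (le_md σ P i)⟩

end Dynamics

section UpdateOrder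

variable {α : Type} {ι : Type*}

/-- The pairs `xy` with `f x < f y`, in an arbitrary sequence. For an injective ranking `f` this is
the update order that always names the alternative of smaller rank first. -/
def ascendingPairs [Fintype α] [LT ι] (f : α → ι) : List (α × α) :=
  (Finset.univ.filter fun p : α × α => f p.1 < f p.2).toList

theorem mem_ascendingPairs [Fintype α] [LT ι] {f : α → ι} {p : α × α} :
    p ∈ ascendingPairs f ↔ f p.1 < f p.2 := by
  simp [ascendingPairs]

theorem nodup_ascendingPairs [Fintype α] [LT ι] (f : α → ι) : (ascendingPairs f).Nodup :=
  Finset.nodup_toList _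

theorem isUpdateOrder_ascendingPairs [Fintype α] [DecidableEq α] [LinearOrder ι] {f : α → ι}
    (hf : Function.Injective f) : IsUpdateOrder (ascendingPairs f) := by
  refine ⟨fun p hp heq => (mem_ascendingPairs.1 hp).ne (congrArg f heq), fun x y hxy => ?_⟩
  simp only [(nodup_ascendingPairs f).count, mem_ascendingPairs]
  rcases (hf.ne hxy).lt_or_gt with h | h <;> simp [h, h.not_gt]

theorem exists_isUpdateOrder_forall_snd_ne [Finite α] [DecidableEq α] (a : α) :
    ∃ σ : List (α × α), IsUpdateOrder σ ∧ ∀ p ∈ σ, p.2 ≠ a := by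
  have := Fintype.ofFinite α
  have : Nonempty α := ⟨a⟩
  let e : α ≃ Fin (Fintype.card α) := (Fintype.equivFin α).setValue a 0
  have he : e a = 0 := Equiv.setValue_eq _ a 0
  refine ⟨ascendingPairs e, isUpdateOrder_ascendingPairs e.injective, ?_⟩
  rintro ⟨x, y⟩ hxy rfl
  exact Fin.not_lt_zero _ (he ▸ mem_ascendingPairs.1 hxy)

end UpdateOrder

theorem stmt_16_general {α : Type} [Finite α] [DecidableEq α] (a : α) :
    ∃ σ : List (α × α), IsUpdateOrder σ ∧
      ∀ {n : ℕ} (P : Fin n → Pref α), UnanUDConsensus P a → UnanUDConsensus (MD σ P) a := by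
  obtain ⟨σ, hσ, hσa⟩ := exists_isUpdateOrder_forall_snd_ne a
  exact ⟨σ, hσ, fun _ ha => ha.md hσa⟩

/-- Majority dynamics enables positive UnanUD-consensus identity control. -/
theorem stmt_16 {n : ℕ} (P : Fin n → Pref A) (hP : ∀ i, IsPref (P i))
    (a : A) (ha : UnanUDConsensus P a) :
    ∃ σ : List (A × A), IsUpdateOrder σ ∧ UnanUDConsensus (MD σ P) a := by
  obtain ⟨σ, hσ, hMD⟩ := stmt_16_general a
  exact ⟨σ, hσ, hMD P ha⟩

end
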